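/- Exhaustive subsumption is symmetry-preserving: if F* is obtained from a CNF formula F by applying the subsumption rule exhaustively, then Aut_syn(F)_{{Lit(F*)}} = Aut_syn(F) and Aut_syn(F)↓_{Lit(F*)} ⊆ Aut_syn(F*). -/

import Mathlib

/-- A literal over a variable type `V`: a variable or its negation. -/
inductive Lit (V : Type) where
  | pos : V → Lit V
  | neg : V → Lit V
deriving DecidableEq

variable {V : Type} [DecidableEq V]

/-- Negation of a literal (so that double negation is the identity). -/
def Lit.negate : Lit V → Lit V
  | .pos v => .neg v
  | .neg v => .pos v

/-- The underlying variable of a literal. -/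
def Lit.var : Lit V → V
  | .pos v => v
  | .neg v => v

/-- A clause is a finite set of literals. -/
abbrev Clause (V : Type) := Finset (Lit V)

/-- A CNF formula is a finite set of clauses. -/
abbrev CNF (V : Type) := Finset (Clause V)

/-- `Var(F)`: the variables occurring in a formula. -/
def CNF.vars (F : CNF V) : Finset V := Finset.sup F (fun C => Finset.image Lit.var C)

/-- `Lit(F) = Var(F) ∪ {v̄ : v ∈ Var(F)}`. -/
def CNF.lits (F : CNF V) : Finset (Lit V) :=
  Finset.image Lit.pos (CNF.vars F) ∪ Finset.image Lit.neg (CNF.vars F)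

/-- The value of a literal under a complete assignment (given on the variables,
which determines a consistent complete assignment on all literals). -/
def Lit.val (σ : V → Bool) : Lit V → Bool
  | .pos v => σ v
  | .neg v => !(σ v)

/-- `C[σ]`: delete from `C` every literal mapped to `⊥` by `σ`
(i.e. keep `l` with `¬l ∉ σ`). -/
def Clause.reduce (σ : V → Bool) (C : Clause V) : Clause V :=
  Finset.filter (fun l => Lit.val σ (Lit.negate l) = false) C

/-- `F[σ]`: delete every clause containing a literal mapped to `⊤` by `σ`
(for a complete assignment: every clause containing no false literal is kept)
and delete from each remaining clause every literal mapped to `⊥`. -/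
def CNF.reduce (F : CNF V) (σ : V → Bool) : CNF V :=
  Finset.image (Clause.reduce σ) (Finset.filter (fun C => ∀ l ∈ C, Lit.val σ l = false) F)

/-- Apply a map on literals elementwise to clauses and formulas. -/
def CNF.map (φ : Lit V → Lit V) (F : CNF V) : CNF V :=
  Finset.image (fun C => Finset.image φ C) F

/-- `φ` is a syntactic symmetry of `F`: a bijection of `Lit(F)` respecting
negation with `φ(F) = F`. -/
def IsSynSym (F : CNF V) (φ : Lit V → Lit V) : Prop :=
  Set.BijOn φ (CNF.lits F : Set (Lit V)) (CNF.lits F : Set (Lit V)) ∧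
  (∀ l ∈ CNF.lits F, φ (Lit.negate l) = Lit.negate (φ l)) ∧
  CNF.map φ F = F

/-- `φ` is a semantic symmetry of `F`: a bijection of `Lit(F)` respecting
negation with `F[σ] = φ(F)[σ]` for every complete assignment `σ`. -/
def IsSemSym (F : CNF V) (φ : Lit V → Lit V) : Prop :=
  Set.BijOn φ (CNF.lits F : Set (Lit V)) (CNF.lits F : Set (Lit V)) ∧
  (∀ l ∈ CNF.lits F, φ (Lit.negate l) = Lit.negate (φ l)) ∧
  ∀ σ : V → Bool, CNF.reduce F σ = CNF.reduce (CNF.map φ F) σ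

/-- Extend a map defined on the literal set `S` by the identity outside `S`. -/
def extendId (S : Finset (Lit V)) (φ : Lit V → Lit V) : Lit V → Lit V :=
  fun l => if l ∈ S then φ l else l

/-- `F[l ↦ ⊤]`: delete every clause containing `l` and delete `l̄` from every
remaining clause. -/
def CNF.assignTrue (F : CNF V) (l : Lit V) : CNF V :=
  Finset.image (fun C => Finset.erase C (Lit.negate l)) (Finset.filter (fun C => l ∉ C) F)

/-- One application of the subsumption rule: if `C, D ∈ F` with `C ⊊ D`,
replace `F` by `F ∖ {D}`. -/
def SubStep (F F' : CNF V) : Prop :=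
  ∃ C D : Clause V, C ∈ F ∧ D ∈ F ∧ C ⊂ D ∧ F' = F.erase D

theorem mem_lits_iff (F : CNF V) (l : Lit V) :
    l ∈ CNF.lits F ↔ ∃ C ∈ F, l ∈ C ∨ Lit.negate l ∈ C := by
  have hv : ∀ v, v ∈ CNF.vars F ↔ ∃ C ∈ F, Lit.pos v ∈ C ∨ Lit.neg v ∈ C := by
    intro v
    simp only [CNF.vars, Finset.mem_sup, Finset.mem_image]
    constructor
    · rintro ⟨C, hC, l, hl, rfl⟩
      cases l with
      | pos v => exact ⟨C, hC, Or.inl hl⟩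
      | neg v => exact ⟨C, hC, Or.inr hl⟩
    · rintro ⟨C, hC, hl | hl⟩
      · exact ⟨C, hC, _, hl, rfl⟩
      · exact ⟨C, hC, _, hl, rfl⟩
  cases l with
  | pos v => simp [CNF.lits, hv, Lit.negate]
  | neg v => simp [CNF.lits, hv, Lit.negate, or_comm]

theorem substeps_inv (F Fs : CNF V) (h : Relation.ReflTransGen SubStep F Fs) :
    Fs ⊆ F ∧ ∀ D ∈ F, ∃ C ∈ Fs, C ⊆ D := by
  induction h with
  | refl => exact ⟨Finset.Subset.refl _, fun D hD => ⟨D, hD, Finset.Subset.refl _⟩⟩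
  | tail _ hs ih =>
    obtain ⟨C0, D0, hC0, hD0, hlt, rfl⟩ := hs
    refine ⟨(Finset.erase_subset _ _).trans ih.1, fun D hD => ?_⟩
    obtain ⟨C, hC, hCD⟩ := ih.2 D hD
    by_cases hc : C = D0
    · subst hc
      exact ⟨C0, Finset.mem_erase.2 ⟨hlt.ne, hC0⟩, hlt.subset.trans hCD⟩
    · exact ⟨C, Finset.mem_erase.2 ⟨hc, hC⟩, hCD⟩

theorem subsumption_aux (F Fs : CNF V)
    (hsteps : Relation.ReflTransGen SubStep F Fs)
    (hdone : ¬ ∃ C D : Clause V, C ∈ Fs ∧ D ∈ Fs ∧ C ⊂ D)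
    (φ : Lit V → Lit V) (h : IsSynSym F φ) :
    φ '' (CNF.lits Fs : Set (Lit V)) = (CNF.lits Fs : Set (Lit V)) ∧ IsSynSym Fs φ := by
  obtain ⟨hsub, hcov⟩ := substeps_inv F Fs hsteps
  obtain ⟨hbij, hneg, hmap⟩ := h
  have hcl : ∀ C ∈ F, (C : Set (Lit V)) ⊆ (CNF.lits F : Set (Lit V)) := fun C hC l hl =>
    (mem_lits_iff F l).2 ⟨C, hC, Or.inl hl⟩
  have hlits : CNF.lits Fs ⊆ CNF.lits F := by
    intro l hl
    obtain ⟨C, hC, hl⟩ := (mem_lits_iff _ _).1 hl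
    exact (mem_lits_iff _ _).2 ⟨C, hsub hC, hl⟩
  have hinj := hbij.injOn
  have himg : ∀ C ∈ F, ∀ D ∈ F, Finset.image φ C ⊆ Finset.image φ D → C ⊆ D := by
    intro C hC D hD hCD l hl
    obtain ⟨m, hm, hml⟩ := Finset.mem_image.1 (hCD (Finset.mem_image_of_mem φ hl))
    rwa [← hinj (hcl D hD hm) (hcl C hC hl) hml]
  have hmapsub : CNF.map φ Fs ⊆ Fs := by
    intro E hE
    obtain ⟨C, hC, rfl⟩ := Finset.mem_image.1 hE
    have hCF : Finset.image φ C ∈ F := by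
      rw [← hmap]
      exact Finset.mem_image.2 ⟨C, hsub hC, rfl⟩
    obtain ⟨D, hD, hDC⟩ := hcov _ hCF
    have hD' := hsub hD
    rw [← hmap] at hD'
    obtain ⟨D', hD'F, rfl⟩ := Finset.mem_image.1 hD'
    have h1 : D' ⊆ C := himg _ hD'F _ (hsub hC) hDC
    obtain ⟨B, hB, hBD⟩ := hcov _ hD'F
    have h2 : B = C := by
      by_contra hne
      exact hdone ⟨B, C, hB, hC, lt_of_le_of_ne (hBD.trans h1) hne⟩
    have h3 : D' = C := Finset.Subset.antisymm h1 (h2 ▸ hBD)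
    rw [← h3]
    exact hD
  have hmapeq : CNF.map φ Fs = Fs := by
    refine Finset.eq_of_subset_of_card_le hmapsub (le_of_eq ?_)
    refine (Finset.card_image_of_injOn ?_).symm
    intro C hC D hD hCD
    exact Finset.Subset.antisymm (himg _ (hsub hC) _ (hsub hD) (Finset.Subset.antisymm_iff.1 hCD).1)
      (himg _ (hsub hD) _ (hsub hC) (Finset.Subset.antisymm_iff.1 hCD).2)
  have hinj' : Set.InjOn φ (CNF.lits Fs : Set (Lit V)) := hinj.mono (by exact_mod_cast hlits)
  have hls : Finset.image φ (CNF.lits Fs) ⊆ CNF.lits Fs := by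
    intro m hm
    obtain ⟨l, hl, rfl⟩ := Finset.mem_image.1 hm
    obtain ⟨C, hC, hlC⟩ := (mem_lits_iff _ _).1 hl
    refine (mem_lits_iff _ _).2 ⟨Finset.image φ C, hmapsub (Finset.mem_image.2 ⟨C, hC, rfl⟩), ?_⟩
    rw [← hneg l (hlits hl)]
    exact hlC.imp (Finset.mem_image_of_mem φ) (Finset.mem_image_of_mem φ)
  have hleq : Finset.image φ (CNF.lits Fs) = CNF.lits Fs :=
    Finset.eq_of_subset_of_card_le hls (le_of_eq (Finset.card_image_of_injOn hinj').symm)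
  have himeq : φ '' (CNF.lits Fs : Set (Lit V)) = (CNF.lits Fs : Set (Lit V)) := by
    rw [← Finset.coe_image, hleq]
  refine ⟨himeq, ?_, fun l hl => hneg l (hlits hl), hmapeq⟩
  have hb := hinj'.bijOn_image
  rwa [himeq] at hb

/-- Exhaustive subsumption is symmetry-preserving: if `F*` is
obtained from `F` by exhaustively applying subsumption, then every syntactic
symmetry of `F` setwise stabilizes `Lit(F*)`
(so `Aut_syn(F)_{{Lit(F*)}} = Aut_syn(F)`) and its restriction to `Lit(F*)`
is a syntactic symmetry of `F*` (so `Aut_syn(F)↓_{Lit(F*)} ⊆ Aut_syn(F*)`). -/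
theorem exhaustive_subsumption_symmetry_preserving (F Fs : CNF V)
    (hsteps : Relation.ReflTransGen SubStep F Fs)
    (hdone : ¬ ∃ C D : Clause V, C ∈ Fs ∧ D ∈ Fs ∧ C ⊂ D) :
    (∀ φ : Lit V → Lit V, IsSynSym F φ →
        φ '' (CNF.lits Fs : Set (Lit V)) = (CNF.lits Fs : Set (Lit V))) ∧
    (∀ φ : Lit V → Lit V, IsSynSym F φ →
        φ '' (CNF.lits Fs : Set (Lit V)) = (CNF.lits Fs : Set (Lit V)) →
        IsSynSym Fs φ) := by
  exact ⟨fun φ h => (subsumption_aux F Fs hsteps hdone φ h).1,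
    fun φ h _ => (subsumption_aux F Fs hsteps hdone φ h).2⟩
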